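/- Consider the linear recursion x_{k+1} = A·x_k + B·u_k in ℝ^{n_x} with A ∈ ℝ^{n_x×n_x}, B ∈ ℝ^{n_x×n_u}, and let C_N = [B, A·B, A²·B, …, A^{N−1}·B] ∈ ℝ^{n_x×(n_u·N)} denote the matrix such that x_N = A^N·x_0 + C_N·u for the stacked input vector u = (u_{N−1}; u_{N−2}; …; u_0) ∈ ℝ^{n_u·N}. Suppose the initial-state set is the CCG X_0 = {G_x·ξ_x + c_x : A_x·ξ_x = b_x, ξ_x ∈ C_x} ⊆ ℝ^{n_x} and the set of stacked input sequences is the CCG U = {G_u·ξ_u + c_u : A_u·ξ_u = b_u, ξ_u ∈ C_u} ⊆ ℝ^{n_u·N}. Then the joint state–control set {(x_N, u) : x_0 ∈ X_0, u ∈ U} ⊆ ℝ^{n_x + n_u·N} equals the CCG with generator matrix [[A^N·G_x, C_N·G_u],[0, G_u]], center (A^N·c_x + C_N·c_u; c_u), block-diagonal constraint matrix diag(A_x, A_u), constraint vector (b_x; b_u), and constraint set C_x × C_u. -/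

import Mathlib

/-! Both sides are parametrised by pairs of generator coefficients `(ξ_x, ξ_u)`, stacked as
`Sum.elim ξ_x ξ_u`: the block-diagonal constraint splits into the constraints of `X₀` and `U`, and
`A^N (G_x ξ_x + c_x) + C_N (G_u ξ_u + c_u)` expands by linearity into the first block row of the
joint generator and center. -/

/-- A Constrained Convex Generator (CCG): the set `{G ξ + c : A ξ = b, ξ ∈ C}`. -/
def CCG {n g k : Type*} [Fintype g] (G : Matrix n g ℝ) (c : n → ℝ)
    (A : Matrix k g ℝ) (b : k → ℝ) (C : Set (g → ℝ)) : Set (n → ℝ) :=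
  {x | ∃ ξ, A.mulVec ξ = b ∧ ξ ∈ C ∧ x = G.mulVec ξ + c}

/-- With `C_N = [B, A B, …, A^{N-1} B]` the controllability-type matrix (so that
`x_N = A^N x₀ + C_N u` for the stacked input `u`, where the block of `u` indexed by
`k` multiplies `A^{N-k-1} B`), if the initial states form the CCG `X₀` and the stacked
input sequences form the CCG `U`, then the joint state–control set
`{(x_N, u) : x₀ ∈ X₀, u ∈ U}` is the CCG with generator `[[A^N G_x, C_N G_u],[0, G_u]]`,
center `(A^N c_x + C_N c_u; c_u)`, constraint matrix `diag(A_x, A_u)`, constraint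
vector `(b_x; b_u)`, and constraint set `C_x × C_u`. -/
theorem joint_state_control_set_eq_ccg {nx nu N gx gu kx ku : ℕ}
    (A : Matrix (Fin nx) (Fin nx) ℝ) (B : Matrix (Fin nx) (Fin nu) ℝ)
    (CN : Matrix (Fin nx) (Fin N × Fin nu) ℝ)
    (hCN : ∀ (i : Fin nx) (k : Fin N) (j : Fin nu),
      CN i (k, j) = (A ^ (N - (k : ℕ) - 1) * B) i j)
    (Gx : Matrix (Fin nx) (Fin gx) ℝ) (cx : Fin nx → ℝ)
    (Ax : Matrix (Fin kx) (Fin gx) ℝ) (bx : Fin kx → ℝ) (Cx : Set (Fin gx → ℝ))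
    (Gu : Matrix (Fin N × Fin nu) (Fin gu) ℝ) (cu : Fin N × Fin nu → ℝ)
    (Au : Matrix (Fin ku) (Fin gu) ℝ) (bu : Fin ku → ℝ) (Cu : Set (Fin gu → ℝ)) :
    {p : (Fin nx ⊕ (Fin N × Fin nu)) → ℝ |
        ∃ x0 ∈ CCG Gx cx Ax bx Cx, ∃ u ∈ CCG Gu cu Au bu Cu,
          p = Sum.elim ((A ^ N).mulVec x0 + CN.mulVec u) u}
      = CCG (Matrix.fromBlocks ((A ^ N) * Gx) (CN * Gu) 0 Gu)
          (Sum.elim ((A ^ N).mulVec cx + CN.mulVec cu) cu)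
          (Matrix.fromBlocks Ax 0 0 Au) (Sum.elim bx bu)
          {ξ | (ξ ∘ Sum.inl) ∈ Cx ∧ (ξ ∘ Sum.inr) ∈ Cu} := by
  ext p
  constructor
  · rintro ⟨_, ⟨ξx, hAx, hCx, rfl⟩, _, ⟨ξu, hAu, hCu, rfl⟩, rfl⟩
    refine ⟨Sum.elim ξx ξu, ?_, ⟨hCx, hCu⟩, ?_⟩
    · simp [Matrix.fromBlocks_mulVec, hAx, hAu]
    · ext (i | i)
      · simp [Matrix.fromBlocks_mulVec, Matrix.mulVec_add]
        ring
      · simp [Matrix.fromBlocks_mulVec]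
  · rintro ⟨ξ, hA, ⟨hCx, hCu⟩, rfl⟩
    rw [Matrix.fromBlocks_mulVec] at hA
    -- The two blocks of the constraint decouple because the constraint matrix is block diagonal.
    have hAx : Ax.mulVec (ξ ∘ Sum.inl) = bx := by
      simpa using congrArg (fun f => f ∘ Sum.inl) hA
    have hAu : Au.mulVec (ξ ∘ Sum.inr) = bu := by
      simpa using congrArg (fun f => f ∘ Sum.inr) hA
    refine ⟨_, ⟨ξ ∘ Sum.inl, hAx, hCx, rfl⟩, _, ⟨ξ ∘ Sum.inr, hAu, hCu, rfl⟩, ?_⟩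
    ext (i | i)
    · simp [Matrix.fromBlocks_mulVec, Matrix.mulVec_add]
      ring
    · simp [Matrix.fromBlocks_mulVec]
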